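/- Let f and g be symmetric simple-loop symbols of class SL^α with α ≥ 2, and for each n set h = 1/(n+1) (so that f + h^h·g and f + g are again symmetric simple-loop symbols). Then there exist a constant C > 0 and N ∈ ℕ such that for all n ≥ N and all s ∈ (0,π): |η_{f+h^h·g}(s) − η_{f+g}(s) − φ(s)·h·log h| ≤ C h² (log h)². -/

import Mathlib

open MeasureTheory Filter Real Topology

noncomputable section

/-- The `k`-th Fourier coefficient of a (2π-periodic) function `u : ℝ → ℝ`. -/
def fCoeff (u : ℝ → ℝ) (k : ℤ) : ℂ :=
  (1 / (2 * (π : ℂ))) * ∫ θ in (0:ℝ)..(2*π), (u θ : ℂ) * Complex.exp (-Complex.I * (k : ℂ) * (θ : ℂ))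

/-- The `n × n` Toeplitz matrix generated by `u`. -/
def toeplitz (u : ℝ → ℝ) (n : ℕ) : Matrix (Fin n) (Fin n) ℂ :=
  Matrix.of fun i j => fCoeff u ((i : ℤ) - (j : ℤ))

/-- The eigenvalues of a Hermitian matrix, arranged in nondecreasing order. -/
def sortedEigs {n : ℕ} {A : Matrix (Fin n) (Fin n) ℂ} (hA : A.IsHermitian) : Fin n → ℝ :=
  hA.eigenvalues ∘ Tuple.sort hA.eigenvalues

/-- Cauchy principal value of `∫_0^{2π} u`, where `u` is singular (only) at `s` and `2π - s`. -/
def pvIntegral2 (u : ℝ → ℝ) (s : ℝ) : ℝ :=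
  limUnder (𝓝[>] (0:ℝ)) fun ε =>
    ∫ σ in Set.Icc (0:ℝ) (2*π) \ (Set.Ioo (s-ε) (s+ε) ∪ Set.Ioo (2*π-s-ε) (2*π-s+ε)), u σ

/-- The function `b_f(σ,s) = (f(σ) - f(s))/(2(cos s - cos σ))`, extended by continuity to the
points where `cos σ = cos s`. -/
def bSymb (f : ℝ → ℝ) (σ s : ℝ) : ℝ :=
  if Real.cos σ = Real.cos s then
    limUnder (𝓝[≠] σ) fun τ => (f τ - f s) / (2 * (Real.cos s - Real.cos τ))
  else (f σ - f s) / (2 * (Real.cos s - Real.cos σ))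

/-- The function `η_f`. -/
def etaF (f : ℝ → ℝ) (s : ℝ) : ℝ :=
  (Real.sin s / (2*π)) *
    pvIntegral2 (fun σ => Real.log (bSymb f σ s) / (Real.cos s - Real.cos σ)) s

/-- The function `ψ` associated with symbols `f` and `g`. -/
def psiF (f g : ℝ → ℝ) (s : ℝ) : ℝ :=
  (Real.sin s / (2*π)) *
    pvIntegral2 (fun σ => bSymb g σ s / (bSymb f σ s * (Real.cos s - Real.cos σ))) s

/-- The function `φ` associated with symbols `f` and `g`. -/
def phiF (f g : ℝ → ℝ) (s : ℝ) : ℝ :=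
  (Real.sin s / (2*π)) *
    pvIntegral2
      (fun σ => bSymb g σ s / ((bSymb f σ s + bSymb g σ s) * (Real.cos s - Real.cos σ))) s

/-- A symmetric simple-loop symbol of class `SL^α`. -/
structure IsSimpleLoop (α : ℝ) (f : ℝ → ℝ) : Prop where
  periodic : Function.Periodic f (2*π)
  smooth : ContDiff ℝ 2 f
  wiener : Summable fun k : ℤ => ‖fCoeff f k‖ * ((k.natAbs : ℝ) + 1) ^ α
  symm : ∀ s, f (2*π - s) = f s
  f_zero : f 0 = 0
  deriv_zero : deriv f 0 = 0
  deriv2_zero : 0 < deriv (deriv f) 0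
  deriv_pos : ∀ σ ∈ Set.Ioo (0:ℝ) π, 0 < deriv f σ
  deriv_pi : deriv f π = 0
  deriv2_pi : deriv (deriv f) π < 0
  f_pi : 0 < f π

end

section EtaProof

open Set

lemma cauchy_mvt {p q p' q' : ℝ → ℝ} (hp : ∀ x, HasDerivAt p (p' x) x)
    (hq : ∀ x, HasDerivAt q (q' x) x) {s σ : ℝ} (h : σ ≠ s) :
    ∃ ξ ∈ Set.uIcc s σ, ξ ∈ Ioo (min s σ) (max s σ) ∧ (p σ - p s) * q' ξ = (q σ - q s) * p' ξ := by
  rcases lt_or_gt_of_ne h with h | h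
  · obtain ⟨c, hc, e⟩ := exists_ratio_hasDerivAt_eq_ratio_slope p p' h
      (fun x _ => (hp x).continuousAt.continuousWithinAt) (fun x _ => hp x) q q'
      (fun x _ => (hq x).continuousAt.continuousWithinAt) (fun x _ => hq x)
    exact ⟨c, by rw [Set.uIcc_of_ge h.le]; exact Ioo_subset_Icc_self hc,
      by rwa [min_eq_right h.le, max_eq_left h.le], by linarith⟩
  · obtain ⟨c, hc, e⟩ := exists_ratio_hasDerivAt_eq_ratio_slope p p' h
      (fun x _ => (hp x).continuousAt.continuousWithinAt) (fun x _ => hp x) q q'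
      (fun x _ => (hq x).continuousAt.continuousWithinAt) (fun x _ => hq x)
    exact ⟨c, by rw [Set.uIcc_of_le h.le]; exact Ioo_subset_Icc_self hc,
      by rwa [min_eq_left h.le, max_eq_right h.le], by linarith⟩

lemma cos_sub_lower {s σ : ℝ} (hs : s ∈ Ioo (0:ℝ) π) (hσ : σ ∈ Ioo (0:ℝ) π) :
    2 * (σ - s)^2 / π^2 ≤ |Real.cos s - Real.cos σ| := by
  wlog h : s ≤ σ generalizing s σ
  · have := this hσ hs (le_of_not_ge h)
    rw [abs_sub_comm]
    convert this using 2
    ring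
  have h1 : Real.cos s - Real.cos σ = 2 * sin ((s+σ)/2) * sin ((σ-s)/2) := by
    rw [Real.cos_sub_cos, show (s-σ)/2 = -((σ-s)/2) by ring, Real.sin_neg]; ring
  have h2 : (σ - s)/π ≤ sin ((σ-s)/2) := by
    have := Real.mul_le_sin (x := (σ-s)/2) (by linarith) (by linarith [hs.1, hσ.2])
    calc (σ-s)/π = 2/π*((σ-s)/2) := by ring
      _ ≤ _ := this
  have h3 : sin ((σ-s)/2) ≤ sin ((s+σ)/2) := by
    have : sin ((s+σ)/2) - sin ((σ-s)/2) = 2 * sin (s/2) * cos (σ/2) := by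
      rw [Real.sin_sub_sin]; ring_nf
    have h4 : 0 ≤ sin (s/2) := Real.sin_nonneg_of_nonneg_of_le_pi (by linarith [hs.1]) (by linarith [hs.1, hs.2])
    have h5 : 0 ≤ cos (σ/2) := Real.cos_nonneg_of_mem_Icc ⟨by linarith [hσ.1, pi_pos], by linarith [hσ.2]⟩
    nlinarith [mul_nonneg h4 h5]
  have h0 : 0 ≤ (σ-s)/π := div_nonneg (by linarith) pi_pos.le
  rw [h1]
  refine le_trans ?_ (le_abs_self _)
  calc 2 * (σ - s)^2 / π^2 = 2 * ((σ-s)/π) * ((σ-s)/π) := by field_simp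
    _ ≤ _ := by
      have h6 := h2.trans h3
      have h7 := h0.trans h6
      gcongr

/-- Pointwise estimate. -/
lemma pointwise_bound {Φ Φ' : ℝ → ℝ} {M s σ x : ℝ} (hs : s ∈ Ioo (0:ℝ) π) (hσ : σ ∈ Ioo (0:ℝ) π)
    (hne : σ ≠ s)
    (hΦ : ∀ x ∈ Ioo (0:ℝ) π, |Φ x| ≤ M)
    (hd : ∀ x ∈ Ioo (0:ℝ) π, HasDerivAt Φ (Φ' x) x)
    (hd' : ∀ x ∈ Ioo (0:ℝ) π, |Φ' x| ≤ M / sin x)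
    (hx : ∃ ξ ∈ Set.uIcc s σ, x = Φ ξ) :
    |(x - Φ s) / (Real.cos s - Real.cos σ)| ≤ 5 * π^2 * M * (sin s ^ 2 + (σ - s)^2)⁻¹ := by
  obtain ⟨ξ, hξ, rfl⟩ := hx
  have hsub : Set.uIcc s σ ⊆ Ioo 0 π := Set.OrdConnected.uIcc_subset Set.ordConnected_Ioo hs hσ
  have hM : 0 ≤ M := (abs_nonneg _).trans (hΦ s hs)
  have hsin : 0 < sin s := Real.sin_pos_of_mem_Ioo hs
  have hpi : (9:ℝ) ≤ π^2 := by nlinarith [Real.pi_gt_three]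
  have hd0 : 0 < |σ - s| := abs_pos.2 (sub_ne_zero.2 hne)
  have hsq : |σ - s|^2 = (σ-s)^2 := sq_abs _
  rw [abs_div]
  rcases le_or_gt (sin s / 2) |σ - s| with h | h
  · have h1 := cos_sub_lower hs hσ
    have h2 : |Φ ξ - Φ s| ≤ 2 * M := by
      have := abs_sub (Φ ξ) (Φ s)
      linarith [hΦ s hs, hΦ ξ (hsub hξ)]
    have hpos : 0 < 2 * (σ - s)^2 / π^2 := by
      rw [← hsq]; positivity
    calc |Φ ξ - Φ s| / |Real.cos s - Real.cos σ| ≤ 2 * M / (2 * (σ - s)^2 / π^2) := by gcongr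
      _ = π^2 * M * ((σ-s)^2)⁻¹ := by
        have : (σ - s) ≠ 0 := sub_ne_zero.2 hne
        field_simp
      _ ≤ π^2 * M * (5 * (sin s ^ 2 + (σ - s)^2)⁻¹) := by
        gcongr
        rw [inv_le_comm₀ (by rw [← hsq]; positivity) (by positivity), mul_inv, inv_inv]
        nlinarith
      _ = _ := by ring
  · have hlow : ∀ y ∈ Set.uIcc s σ, sin s / 2 ≤ sin y := by
      intro y hy
      have h1 : |y - s| ≤ |σ - s| := Set.abs_sub_left_of_mem_uIcc hy
      have h2 : |sin s - sin y| ≤ |s - y| := by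
        have := Real.lipschitzWith_sin.dist_le_mul s y
        simpa [Real.dist_eq] using this
      rw [abs_sub_comm s y] at h2
      linarith [le_abs_self (sin s - sin y)]
    have h1 : |Φ ξ - Φ s| ≤ (2 * M / sin s) * |ξ - s| := by
      have := (convex_uIcc s σ).norm_image_sub_le_of_norm_hasDerivWithin_le (f := Φ) (f' := Φ')
        (C := 2 * M / sin s) (x := s) (y := ξ) (fun y hy => (hd y (hsub hy)).hasDerivWithinAt)
        (fun y hy => by
          refine (hd' y (hsub hy)).trans ?_
          rw [div_le_div_iff₀ (Real.sin_pos_of_mem_Ioo (hsub hy)) hsin]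
          nlinarith [hlow y hy]) left_mem_uIcc hξ
      simpa using this
    have h2 : |ξ - s| ≤ |σ - s| := Set.abs_sub_left_of_mem_uIcc hξ
    have h3 : sin s / 2 * |σ - s| ≤ |Real.cos s - Real.cos σ| := by
      obtain ⟨c, hc, -, e⟩ := cauchy_mvt (p := Real.cos) (q := id) (q' := fun _ => 1)
        (fun x => Real.hasDerivAt_cos x) (fun x => hasDerivAt_id x) hne
      have : Real.cos s - Real.cos σ = (σ - s) * sin c := by simp at e; linarith
      rw [this, abs_mul, abs_of_pos (Real.sin_pos_of_mem_Ioo (hsub hc)), mul_comm]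
      gcongr
      exact hlow c hc
    calc |Φ ξ - Φ s| / |Real.cos s - Real.cos σ|
        ≤ ((2 * M / sin s) * |σ - s|) / (sin s / 2 * |σ - s|) := by
          gcongr
          exact h1.trans (by gcongr)
      _ = 4 * M * (sin s ^ 2)⁻¹ := by field_simp; ring
      _ ≤ 4 * M * (5/4 * (sin s ^ 2 + (σ - s)^2)⁻¹) := by
        gcongr
        rw [inv_le_comm₀ (by positivity) (by positivity), mul_inv, inv_inv]
        nlinarith
      _ = 5 * M * (sin s ^ 2 + (σ - s)^2)⁻¹ := by ring
      _ ≤ _ := by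
        gcongr
        nlinarith

lemma kernel_integrable {a : ℝ} (ha : 0 < a) (s : ℝ) :
    Integrable (fun x : ℝ => (a^2 + (x - s)^2)⁻¹) ∧ ∫ x : ℝ, (a^2 + (x - s)^2)⁻¹ = π / a := by
  have e : ∀ x : ℝ, (a^2 + x^2)⁻¹ = (a^2)⁻¹ * (1 + (x / a)^2)⁻¹ := by
    intro x; rw [← mul_inv]; congr 1; field_simp
  have h1 : Integrable (fun x : ℝ => (a^2 + x^2)⁻¹) := by
    simp_rw [e]
    exact ((integrable_comp_div_iff (fun x : ℝ => (1 + x^2)⁻¹) ha.ne').2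
      integrable_inv_one_add_sq).const_mul _
  refine ⟨h1.comp_sub_right s, ?_⟩
  rw [integral_sub_right_eq_self (fun x : ℝ => (a^2 + x^2)⁻¹) s]
  simp_rw [e]
  rw [integral_const_mul, Measure.integral_comp_div (fun x : ℝ => (1 + x^2)⁻¹) a,
    integral_univ_inv_one_add_sq, abs_of_pos ha, smul_eq_mul]
  field_simp

lemma good_of_mvt {Φ Φ' F : ℝ → ℝ} {M s : ℝ} (hs : s ∈ Ioo (0:ℝ) π)
    (hΦ : ∀ x ∈ Ioo (0:ℝ) π, |Φ x| ≤ M)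
    (hd : ∀ x ∈ Ioo (0:ℝ) π, HasDerivAt Φ (Φ' x) x)
    (hd' : ∀ x ∈ Ioo (0:ℝ) π, |Φ' x| ≤ M / sin x)
    (hF : Measurable F) (hsymm : ∀ x, F (2*π - x) = F x)
    (hmv : ∀ σ ∈ Ioo (0:ℝ) π, σ ≠ s → ∃ ξ ∈ Set.uIcc s σ, F σ = Φ ξ) :
    IntegrableOn (fun σ => (F σ - Φ s) / (Real.cos s - Real.cos σ)) (Icc 0 (2*π)) ∧
    |sin s * ∫ σ in Icc 0 (2*π), (F σ - Φ s) / (Real.cos s - Real.cos σ)| ≤ 10 * π^3 * M := by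
  have hsin : 0 < sin s := Real.sin_pos_of_mem_Ioo hs
  have hM : 0 ≤ M := (abs_nonneg _).trans (hΦ s hs)
  obtain ⟨k1, k2⟩ := kernel_integrable hsin s
  set B : ℝ → ℝ := fun x => 5 * π^2 * M * (sin s ^ 2 + (x - s)^2)⁻¹ with hB
  have hBnn : ∀ x, 0 ≤ B x := fun x => by positivity
  have hBi : Integrable B := k1.const_mul _
  have hBv : ∫ x, B x = 5 * π^2 * M * (π / sin s) := by
    rw [hB, integral_const_mul, k2]
  have hBi' : Integrable (fun x => B (2*π - x)) := hBi.comp_sub_left (2*π)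
  have hBv' : ∫ x, B (2*π - x) = 5 * π^2 * M * (π / sin s) := by
    rw [integral_sub_left_eq_self B volume (2*π), hBv]
  have hmeas : Measurable (fun σ => (F σ - Φ s) / (Real.cos s - Real.cos σ)) := by fun_prop
  have hT : ({0, π, 2*π, s, 2*π - s} : Set ℝ).Countable := by
    simp
  have hae : ∀ᵐ σ ∂(volume.restrict (Icc (0:ℝ) (2*π))),
      ‖(F σ - Φ s) / (Real.cos s - Real.cos σ)‖ ≤ B σ + B (2*π - σ) := by
    rw [ae_restrict_iff' measurableSet_Icc]
    filter_upwards [hT.ae_notMem volume] with σ hσ hI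
    simp only [Set.mem_insert_iff, Set.mem_singleton_iff, not_or] at hσ
    obtain ⟨n1, n2, n3, n4, n5⟩ := hσ
    rcases lt_or_gt_of_ne n2 with h | h
    · have hm : σ ∈ Ioo (0:ℝ) π := ⟨lt_of_le_of_ne hI.1 (Ne.symm n1), h⟩
      have := pointwise_bound hs hm n4 hΦ hd hd' (hmv σ hm n4)
      rw [Real.norm_eq_abs]
      linarith [hBnn (2*π - σ)]
    · have hm : 2*π - σ ∈ Ioo (0:ℝ) π :=
        ⟨by linarith [lt_of_le_of_ne hI.2 n3], by linarith⟩
      have n6 : 2*π - σ ≠ s := fun h => n5 (by linarith)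
      have := pointwise_bound hs hm n6 hΦ hd hd' (hmv _ hm n6)
      rw [hsymm, Real.cos_two_pi_sub] at this
      rw [Real.norm_eq_abs]
      linarith [hBnn σ]
  have hsum := hBi.add hBi'
  have hint : IntegrableOn (fun σ => (F σ - Φ s) / (Real.cos s - Real.cos σ)) (Icc 0 (2*π)) :=
    Integrable.mono' (hsum.integrableOn) hmeas.aestronglyMeasurable hae
  refine ⟨hint, ?_⟩
  have h1 : |∫ σ in Icc 0 (2*π), (F σ - Φ s) / (Real.cos s - Real.cos σ)|
      ≤ 10 * π^2 * M * (π / sin s) := by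
    calc _ ≤ ∫ σ in Icc 0 (2*π), (B σ + B (2*π - σ)) :=
          norm_integral_le_of_norm_le hsum.integrableOn hae
      _ ≤ ∫ σ, (B σ + B (2*π - σ)) :=
          setIntegral_le_integral hsum (Eventually.of_forall fun x => add_nonneg (hBnn _) (hBnn _))
      _ = _ := by rw [integral_add hBi hBi', hBv, hBv']; ring
  rw [abs_mul, abs_of_pos hsin]
  calc _ ≤ sin s * (10 * π^2 * M * (π / sin s)) := by gcongr
    _ = _ := by field_simp

/-- The truncated domain. -/
lemma dom_eq {s ε : ℝ} (hs : s ∈ Ioo (0:ℝ) π) (hε : 0 < ε) (h1 : ε < s) (h2 : ε < π - s) :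
    Icc (0:ℝ) (2*π) \ (Ioo (s-ε) (s+ε) ∪ Ioo (2*π-s-ε) (2*π-s+ε))
      = Icc 0 (s-ε) ∪ (Icc (s+ε) (2*π-s-ε) ∪ Icc (2*π-s+ε) (2*π)) := by
  obtain ⟨h3, h4⟩ := hs
  ext x
  simp only [Set.mem_sdiff, mem_union, mem_Icc, mem_Ioo, not_or, not_and, not_lt]
  constructor
  · rintro ⟨⟨a, b⟩, c, d⟩
    by_cases e1 : x ≤ s - ε
    · exact Or.inl ⟨a, e1⟩
    · have := c (not_le.1 e1)
      by_cases e2 : x ≤ 2*π - s - ε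
      · exact Or.inr (Or.inl ⟨this, e2⟩)
      · exact Or.inr (Or.inr ⟨d (not_le.1 e2), b⟩)
  · rintro (⟨a, b⟩ | ⟨a, b⟩ | ⟨a, b⟩)
    · exact ⟨⟨a, by linarith⟩, fun h => by linarith, fun h => by linarith⟩
    · exact ⟨⟨by linarith, by linarith⟩, fun h => by linarith, fun h => by linarith⟩
    · exact ⟨⟨by linarith, by linarith⟩, fun h => by linarith, fun h => by linarith⟩

lemma cos_sub_prod (s σ : ℝ) :
    Real.cos s - Real.cos σ = 2 * sin ((σ+s)/2) * sin ((σ-s)/2) := by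
  rw [Real.cos_sub_cos, show (s-σ)/2 = -((σ-s)/2) by ring, Real.sin_neg, add_comm s σ]; ring

lemma sin_half_ne {s σ : ℝ} (hs : s ∈ Ioo (0:ℝ) π) (hσ : σ ∈ Icc (0:ℝ) (2*π)) (h1 : σ ≠ s)
    (h2 : σ ≠ 2*π - s) : sin ((σ+s)/2) ≠ 0 ∧ sin ((σ-s)/2) ≠ 0 := by
  obtain ⟨a, b⟩ := hs
  obtain ⟨c, d⟩ := hσ
  constructor
  · rcases lt_or_gt_of_ne h2 with h | h
    · exact (Real.sin_pos_of_pos_of_lt_pi (by linarith) (by linarith)).ne'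
    · have := Real.sin_pos_of_pos_of_lt_pi (x := (σ+s)/2 - π) (by linarith) (by linarith)
      rw [Real.sin_sub_pi] at this
      linarith
  · rcases lt_or_gt_of_ne h1 with h | h
    · exact (Real.sin_neg_of_neg_of_neg_pi_lt (by linarith) (by linarith)).ne
    · exact (Real.sin_pos_of_pos_of_lt_pi (by linarith) (by linarith)).ne'

lemma cos_ne {s σ : ℝ} (hs : s ∈ Ioo (0:ℝ) π) (hσ : σ ∈ Icc (0:ℝ) (2*π)) (h1 : σ ≠ s)
    (h2 : σ ≠ 2*π - s) : Real.cos s - Real.cos σ ≠ 0 := by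
  rw [cos_sub_prod]
  obtain ⟨a, b⟩ := sin_half_ne hs hσ h1 h2
  positivity

noncomputable def primA (s σ : ℝ) : ℝ := (Real.log (sin ((σ-s)/2)) - Real.log (sin ((σ+s)/2))) / sin s

lemma primA_deriv {s σ : ℝ} (hs : s ∈ Ioo (0:ℝ) π) (hσ : σ ∈ Icc (0:ℝ) (2*π)) (h1 : σ ≠ s)
    (h2 : σ ≠ 2*π - s) : HasDerivAt (primA s) (1 / (Real.cos s - Real.cos σ)) σ := by
  obtain ⟨a, b⟩ := sin_half_ne hs hσ h1 h2
  have hsin : sin s ≠ 0 := (Real.sin_pos_of_mem_Ioo hs).ne'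
  have d1 : HasDerivAt (fun x : ℝ => (x - s)/2) (1/2) σ := ((hasDerivAt_id σ).sub_const s).div_const 2
  have d2 : HasDerivAt (fun x : ℝ => (x + s)/2) (1/2) σ := ((hasDerivAt_id σ).add_const s).div_const 2
  have := ((d1.sin.log b).sub (d2.sin.log a)).div_const (sin s)
  refine this.congr_deriv ?_
  rw [cos_sub_prod]
  have e : sin s = sin ((σ+s)/2) * cos ((σ-s)/2) - cos ((σ+s)/2) * sin ((σ-s)/2) := by
    rw [← Real.sin_sub]; congr 1; ring
  have e2 : (cos ((σ-s)/2) * (1/2) / sin ((σ-s)/2) - cos ((σ+s)/2) * (1/2) / sin ((σ+s)/2))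
    = sin s / (2 * sin ((σ+s)/2) * sin ((σ-s)/2)) := by
    rw [e]; field_simp
  rw [e2]; field_simp

lemma piece_integral {s a b : ℝ} (hs : s ∈ Ioo (0:ℝ) π) (hab : a ≤ b)
    (h : ∀ x ∈ Icc a b, x ∈ Icc (0:ℝ) (2*π) ∧ x ≠ s ∧ x ≠ 2*π - s) :
    IntegrableOn (fun σ => 1 / (Real.cos s - Real.cos σ)) (Icc a b) ∧
    ∫ σ in Icc a b, 1 / (Real.cos s - Real.cos σ) = primA s b - primA s a := by
  have hc : ContinuousOn (fun σ => 1 / (Real.cos s - Real.cos σ)) (Icc a b) := by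
    apply ContinuousOn.div continuousOn_const (by fun_prop)
    intro x hx
    exact cos_ne hs (h x hx).1 (h x hx).2.1 (h x hx).2.2
  refine ⟨hc.integrableOn_Icc, ?_⟩
  rw [integral_Icc_eq_integral_Ioc, ← intervalIntegral.integral_of_le hab]
  apply intervalIntegral.integral_eq_sub_of_hasDerivAt
  · intro x hx
    rw [uIcc_of_le hab] at hx
    exact primA_deriv hs (h x hx).1 (h x hx).2.1 (h x hx).2.2
  · exact hc.intervalIntegrable_of_Icc hab

lemma trunc_integral {s ε : ℝ} (hs : s ∈ Ioo (0:ℝ) π) (hε : 0 < ε) (h1 : ε < s) (h2 : ε < π - s) :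
    IntegrableOn (fun σ => 1 / (Real.cos s - Real.cos σ))
      (Icc (0:ℝ) (2*π) \ (Ioo (s-ε) (s+ε) ∪ Ioo (2*π-s-ε) (2*π-s+ε))) ∧
    ∫ σ in (Icc (0:ℝ) (2*π) \ (Ioo (s-ε) (s+ε) ∪ Ioo (2*π-s-ε) (2*π-s+ε))),
      1 / (Real.cos s - Real.cos σ)
      = 2 * (Real.log (sin (s + ε/2)) - Real.log (sin (s - ε/2))) / sin s := by
  obtain ⟨h3, h4⟩ := hs
  obtain ⟨i1, e1⟩ := piece_integral (s := s) (a := 0) (b := s - ε) ⟨h3, h4⟩ (by linarith)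
    (fun x hx => ⟨⟨hx.1, by linarith [hx.2]⟩, by linarith [hx.2] |> fun h : x < s => h.ne,
      by linarith [hx.2] |> fun h : x < 2*π - s => h.ne⟩)
  obtain ⟨i2, e2⟩ := piece_integral (s := s) (a := s + ε) (b := 2*π - s - ε) ⟨h3, h4⟩ (by linarith)
    (fun x hx => ⟨⟨by linarith [hx.1], by linarith [hx.2]⟩,
      by linarith [hx.1] |> fun h : s < x => h.ne',
      by linarith [hx.2] |> fun h : x < 2*π - s => h.ne⟩)
  obtain ⟨i3, e3⟩ := piece_integral (s := s) (a := 2*π - s + ε) (b := 2*π) ⟨h3, h4⟩ (by linarith)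
    (fun x hx => ⟨⟨by linarith [hx.1], by linarith [hx.2]⟩,
      by linarith [hx.1] |> fun h : s < x => h.ne',
      by linarith [hx.1] |> fun h : 2*π - s < x => h.ne'⟩)
  rw [dom_eq ⟨h3, h4⟩ hε h1 h2]
  refine ⟨i1.union (i2.union i3), ?_⟩
  rw [setIntegral_union ?_ (measurableSet_Icc.union measurableSet_Icc) i1 (i2.union i3),
    setIntegral_union ?_ measurableSet_Icc i2 i3, e1, e2, e3]
  · unfold primA
    rw [← sub_div, ← sub_div, ← sub_div, ← add_div, ← add_div]
    congr 1
    rw [show (s - ε - s)/2 = -(ε/2) by ring, show (s-ε+s)/2 = s - ε/2 by ring,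
      show (0 - s)/2 = -(s/2) by ring, show (0+s)/2 = s/2 by ring,
      show (2*π - s - ε - s)/2 = π - (s + ε/2) by ring,
      show (2*π - s - ε + s)/2 = π - ε/2 by ring,
      show (s + ε - s)/2 = ε/2 by ring, show (s + ε + s)/2 = s + ε/2 by ring,
      show (2*π - s)/2 = π - s/2 by ring, show (2*π + s)/2 = s/2 + π by ring,
      show (2*π - s + ε - s)/2 = π - (s - ε/2) by ring,
      show (2*π - s + ε + s)/2 = ε/2 + π by ring]
    simp only [Real.sin_pi_sub, Real.sin_neg, Real.log_neg_eq_log, Real.sin_add_pi]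
    ring
  · rw [Set.disjoint_left]
    intro x hx hx'
    linarith [hx.2, hx'.1]
  · rw [Set.disjoint_left]
    rintro x hx (hx' | hx')
    · linarith [hx.2, hx'.1]
    · linarith [hx.2, hx'.1]

lemma small_eps {s : ℝ} (hs : s ∈ Ioo (0:ℝ) π) :
    ∀ᶠ ε in 𝓝[>] (0:ℝ), 0 < ε ∧ ε < s ∧ ε < π - s := by
  have h : Ioo (0:ℝ) (min s (π - s)) ∈ 𝓝[>] (0:ℝ) :=
    Ioo_mem_nhdsGT (lt_min hs.1 (by linarith [hs.2]))
  filter_upwards [h] with ε hε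
  exact ⟨hε.1, hε.2.trans_le (min_le_left _ _), hε.2.trans_le (min_le_right _ _)⟩

lemma pv_eq {s c : ℝ} {F u : ℝ → ℝ} (hs : s ∈ Ioo (0:ℝ) π)
    (hu : ∀ σ ∈ Icc (0:ℝ) (2*π), σ ≠ s → σ ≠ 2*π - s → u σ = F σ / (Real.cos s - Real.cos σ))
    (hint : IntegrableOn (fun σ => (F σ - c) / (Real.cos s - Real.cos σ)) (Icc 0 (2*π))) :
    pvIntegral2 u s = ∫ σ in Icc 0 (2*π), (F σ - c) / (Real.cos s - Real.cos σ) := by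
  set v : ℝ → ℝ := fun σ => (F σ - c) / (Real.cos s - Real.cos σ) with hv
  let S : ℝ → Set ℝ := fun ε => Icc (0:ℝ) (2*π) \ (Ioo (s-ε) (s+ε) ∪ Ioo (2*π-s-ε) (2*π-s+ε))
  have hSm : ∀ ε, MeasurableSet (S ε) := fun ε =>
    measurableSet_Icc.diff (measurableSet_Ioo.union measurableSet_Ioo)
  have hSsub : ∀ ε, S ε ⊆ Icc 0 (2*π) := fun ε => Set.sdiff_subset
  apply Tendsto.limUnder_eq
  have hsin : sin s ≠ 0 := (Real.sin_pos_of_mem_Ioo hs).ne'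
  have t2 : Tendsto (fun ε : ℝ => 2 * (Real.log (sin (s + ε/2)) - Real.log (sin (s - ε/2))) / sin s)
      (𝓝[>] 0) (𝓝 0) := by
    have : ContinuousAt (fun ε : ℝ =>
        2 * (Real.log (sin (s + ε/2)) - Real.log (sin (s - ε/2))) / sin s) 0 := by
      have a1 : ContinuousAt (fun ε : ℝ => Real.log (sin (s + ε/2))) 0 :=
        ContinuousAt.log (by fun_prop) (by simpa using hsin)
      have a2 : ContinuousAt (fun ε : ℝ => Real.log (sin (s - ε/2))) 0 :=
        ContinuousAt.log (by fun_prop) (by simpa using hsin)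
      exact ((a1.sub a2).const_mul 2).div_const _
    have h := this.tendsto
    simp only [zero_div, add_zero, sub_zero, sub_self, mul_zero] at h
    exact h.mono_left nhdsWithin_le_nhds
  have t1 : Tendsto (fun ε => ∫ σ in S ε, v σ) (𝓝[>] 0) (𝓝 (∫ σ in Icc 0 (2*π), v σ)) := by
    have e : ∀ ε, ∫ σ in S ε, v σ = ∫ σ in Icc 0 (2*π), (S ε).indicator v σ := by
      intro ε
      rw [setIntegral_indicator (hSm ε), Set.inter_eq_self_of_subset_right (hSsub ε)]
    simp_rw [e]
    apply tendsto_integral_filter_of_dominated_convergence (fun σ => ‖v σ‖)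
    · exact Eventually.of_forall fun ε => (hint.aestronglyMeasurable).indicator (hSm ε)
    · exact Eventually.of_forall fun ε => Eventually.of_forall fun σ => norm_indicator_le_norm_self _ _
    · exact hint.norm
    · rw [ae_restrict_iff' measurableSet_Icc]
      have hT : ({s, 2*π - s} : Set ℝ).Countable := by simp
      filter_upwards [hT.ae_notMem volume] with σ hσ hI
      simp only [Set.mem_insert_iff, Set.mem_singleton_iff, not_or] at hσ
      obtain ⟨n4, n5⟩ := hσ
      have hp : 0 < min |σ - s| |σ - (2*π - s)| :=
        lt_min (abs_pos.2 (sub_ne_zero.2 n4)) (abs_pos.2 (sub_ne_zero.2 n5))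
      apply tendsto_const_nhds.congr'
      filter_upwards [Ioo_mem_nhdsGT hp] with ε hε
      have h1 := hε.2.trans_le (min_le_left _ _)
      have h2 := hε.2.trans_le (min_le_right _ _)
      rw [Set.indicator_of_mem]
      refine ⟨hI, ?_⟩
      rintro (h | h)
      · exact absurd (abs_lt.2 ⟨by linarith [h.1], by linarith [h.2]⟩ : |σ - s| < ε) (not_lt.2 h1.le)
      · exact absurd (abs_lt.2 ⟨by linarith [h.1], by linarith [h.2]⟩ : |σ - (2*π - s)| < ε)
          (not_lt.2 h2.le)
  have t3 := t1.add (t2.const_mul c)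
  rw [mul_zero, add_zero] at t3
  refine t3.congr' ?_
  filter_upwards [small_eps hs] with ε hε
  obtain ⟨i, e⟩ := trunc_integral hs hε.1 hε.2.1 hε.2.2
  rw [← e, ← integral_const_mul, ← integral_add (hint.mono_set (hSsub ε)) (i.const_mul c)]
  apply setIntegral_congr_fun (hSm ε)
  intro σ hσ
  have n1 : σ ≠ s := by
    rintro rfl
    exact hσ.2 (Or.inl ⟨by linarith, by linarith⟩)
  have n2 : σ ≠ 2*π - s := by
    rintro rfl
    exact hσ.2 (Or.inr ⟨by linarith, by linarith⟩)
  simp only [hu σ hσ.1 n1 n2, hv]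
  ring

lemma sl_deriv {α : ℝ} {w : ℝ → ℝ} (hw : IsSimpleLoop α w) (x : ℝ) :
    HasDerivAt w (deriv w x) x :=
  ((hw.smooth.differentiable (by norm_num)) x).hasDerivAt

lemma sl_contDiff_deriv {α : ℝ} {w : ℝ → ℝ} (hw : IsSimpleLoop α w) : ContDiff ℝ 1 (deriv w) :=
  ((contDiff_succ_iff_deriv (n := 1)).1 (by simpa [one_add_one_eq_two] using hw.smooth)).2.2

lemma sl_deriv2 {α : ℝ} {w : ℝ → ℝ} (hw : IsSimpleLoop α w) (x : ℝ) :
    HasDerivAt (deriv w) (deriv (deriv w) x) x :=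
  (((sl_contDiff_deriv hw).differentiable (by norm_num)) x).hasDerivAt

lemma sl_cont2 {α : ℝ} {w : ℝ → ℝ} (hw : IsSimpleLoop α w) : Continuous (deriv (deriv w)) :=
  (sl_contDiff_deriv hw).continuous_deriv (by norm_num)

lemma sl_bound2 {α : ℝ} {w : ℝ → ℝ} (hw : IsSimpleLoop α w) :
    ∃ B : ℝ, 0 < B ∧ ∀ x ∈ Icc (0:ℝ) π, |deriv (deriv w) x| ≤ B := by
  obtain ⟨B, hB⟩ := (isCompact_Icc (a := (0:ℝ)) (b := π)).exists_bound_of_continuousOn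
    (sl_cont2 hw).continuousOn
  exact ⟨max B 1, by positivity, fun x hx => (hB x hx).trans (le_max_left _ _)⟩

lemma sl_mvt0 {α : ℝ} {w : ℝ → ℝ} (hw : IsSimpleLoop α w) {x : ℝ} (hx : x ∈ Ioo (0:ℝ) π) :
    ∃ ξ ∈ Ioo 0 x, deriv w x = x * deriv (deriv w) ξ := by
  obtain ⟨ξ, -, h, e⟩ := cauchy_mvt (p := deriv w) (q := id) (q' := fun _ => 1)
    (sl_deriv2 hw) (fun x => hasDerivAt_id x) (s := 0) (σ := x) hx.1.ne'
  rw [min_eq_left hx.1.le, max_eq_right hx.1.le] at h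
  refine ⟨ξ, h, ?_⟩
  rw [hw.deriv_zero] at e
  simpa using e

lemma sl_mvtpi {α : ℝ} {w : ℝ → ℝ} (hw : IsSimpleLoop α w) {x : ℝ} (hx : x ∈ Ioo (0:ℝ) π) :
    ∃ ξ ∈ Ioo x π, deriv w x = (π - x) * (- deriv (deriv w) ξ) := by
  obtain ⟨ξ, -, h, e⟩ := cauchy_mvt (p := deriv w) (q := id) (q' := fun _ => 1)
    (sl_deriv2 hw) (fun x => hasDerivAt_id x) (s := π) (σ := x) hx.2.ne
  rw [min_eq_right hx.2.le, max_eq_left hx.2.le] at h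
  refine ⟨ξ, h, ?_⟩
  rw [hw.deriv_pi] at e
  simp at e
  linarith

lemma sl_upper {α : ℝ} {w : ℝ → ℝ} (hw : IsSimpleLoop α w) :
    ∃ B : ℝ, 0 < B ∧ ∀ x ∈ Ioo (0:ℝ) π, deriv w x ≤ B * sin x := by
  obtain ⟨B, hB0, hB⟩ := sl_bound2 hw
  refine ⟨B * (π/2), by positivity, fun x hx => ?_⟩
  rcases le_total x (π/2) with h | h
  · obtain ⟨ξ, h1, e⟩ := sl_mvt0 hw hx
    have h2 := Real.mul_le_sin hx.1.le h
    have h3 := (le_abs_self _).trans (hB ξ ⟨h1.1.le, by linarith [h1.2, hx.2]⟩)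
    rw [e]
    calc x * deriv (deriv w) ξ ≤ x * B := by gcongr; exact hx.1.le
      _ = B * (π/2) * (2/π*x) := by field_simp
      _ ≤ _ := by gcongr
  · obtain ⟨ξ, h1, e⟩ := sl_mvtpi hw hx
    have h2 := Real.mul_le_sin (x := π - x) (by linarith [hx.2]) (by linarith)
    rw [Real.sin_pi_sub] at h2
    have h3 := (neg_le_abs _).trans (hB ξ ⟨by linarith [h1.1, hx.1], h1.2.le⟩)
    rw [e]
    have : 0 ≤ π - x := by linarith [hx.2]
    calc (π - x) * -deriv (deriv w) ξ ≤ (π - x) * B := by gcongr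
      _ = B * (π/2) * (2/π*(π - x)) := by field_simp
      _ ≤ _ := by gcongr

lemma sl_lower {α : ℝ} {w : ℝ → ℝ} (hw : IsSimpleLoop α w) :
    ∃ m : ℝ, 0 < m ∧ ∀ x ∈ Ioo (0:ℝ) π, m * sin x ≤ deriv w x := by
  have c := sl_cont2 hw
  set a := deriv (deriv w) 0 / 2 with ha
  set b := - deriv (deriv w) π / 2 with hb
  have ha0 : 0 < a := by have := hw.deriv2_zero; positivity
  have hb0 : 0 < b := by have := hw.deriv2_pi; rw [hb]; linarith
  have e1 : ∀ᶠ x in 𝓝 (0:ℝ), a < deriv (deriv w) x :=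
    c.continuousAt.eventually (lt_mem_nhds (by rw [ha]; linarith))
  have e2 : ∀ᶠ x in 𝓝 π, deriv (deriv w) x < -b :=
    c.continuousAt.eventually (gt_mem_nhds (by rw [hb]; linarith))
  obtain ⟨δ1, hδ1, k1⟩ := Metric.eventually_nhds_iff.1 e1
  obtain ⟨δ2, hδ2, k2⟩ := Metric.eventually_nhds_iff.1 e2
  set δ := min (min δ1 δ2) (π/2) with hδ
  have hδ0 : 0 < δ := by have := pi_pos; positivity
  have l1 : δ ≤ δ1 := (min_le_left _ _).trans (min_le_left _ _)
  have l2 : δ ≤ δ2 := (min_le_left _ _).trans (min_le_right _ _)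
  have l3 : δ ≤ π/2 := min_le_right _ _
  obtain ⟨y, hy, hmin⟩ := (isCompact_Icc (a := δ) (b := π - δ)).exists_isMinOn
    ⟨π/2, l3, by linarith⟩ (sl_contDiff_deriv hw).continuous.continuousOn
  have hm0 : 0 < deriv w y := hw.deriv_pos y ⟨by linarith [hy.1], by linarith [hy.2]⟩
  refine ⟨min (min a b) (deriv w y), by positivity, fun x hx => ?_⟩
  have q1 : min (min a b) (deriv w y) ≤ a := (min_le_left _ _).trans (min_le_left _ _)
  have q2 : min (min a b) (deriv w y) ≤ b := (min_le_left _ _).trans (min_le_right _ _)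
  have q3 : min (min a b) (deriv w y) ≤ deriv w y := min_le_right _ _
  have hsin := Real.sin_pos_of_mem_Ioo hx
  by_cases h1 : x < δ
  · obtain ⟨ξ, hξ, e⟩ := sl_mvt0 hw hx
    have := k1 (y := ξ) (by rw [Real.dist_eq, sub_zero, abs_of_pos hξ.1]; linarith [hξ.2])
    have h2 := Real.sin_le hx.1.le
    calc _ ≤ a * x := by gcongr
      _ ≤ deriv (deriv w) ξ * x := by have := hx.1.le; gcongr
      _ = _ := by rw [e]; ring
  by_cases h2 : π - δ < x
  · obtain ⟨ξ, hξ, e⟩ := sl_mvtpi hw hx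
    have := k2 (y := ξ) (by rw [Real.dist_eq, abs_sub_comm, abs_of_pos (by linarith [hξ.2])]; linarith [hξ.1])
    have h0 : 0 ≤ π - x := by linarith [hx.2]
    have h2 := Real.sin_le h0
    rw [Real.sin_pi_sub] at h2
    calc _ ≤ b * (π - x) := by gcongr
      _ ≤ (-deriv (deriv w) ξ) * (π - x) := by gcongr; linarith
      _ = _ := by rw [e]; ring
  · have : deriv w y ≤ deriv w x := hmin ⟨not_lt.1 h1, not_lt.1 h2⟩
    calc _ ≤ deriv w y * 1 := by gcongr; exact Real.sin_le_one x
      _ ≤ _ := by linarith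

lemma slope_mvt {α : ℝ} {w : ℝ → ℝ} (hw : IsSimpleLoop α w) {s σ : ℝ} (hs : s ∈ Ioo (0:ℝ) π)
    (hσ : σ ∈ Icc (0:ℝ) π) (hne : σ ≠ s) :
    ∃ ξ ∈ Set.uIcc s σ, ξ ∈ Ioo (0:ℝ) π ∧
      (w σ - w s) / (2 * (Real.cos s - Real.cos σ)) = deriv w ξ / (2 * sin ξ) := by
  obtain ⟨ξ, h1, h2, e⟩ := cauchy_mvt (p := w) (q := fun x => - Real.cos x) (q' := Real.sin)
    (sl_deriv hw) (fun x => (Real.hasDerivAt_cos x).fun_neg.congr_deriv (neg_neg _)) hne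
  have h3 : ξ ∈ Ioo (0:ℝ) π :=
    ⟨(le_min hs.1.le hσ.1).trans_lt h2.1, h2.2.trans_le (max_le hs.2.le hσ.2)⟩
  refine ⟨ξ, h1, h3, ?_⟩
  have h4 := (Real.sin_pos_of_mem_Ioo h3).ne'
  have h5 := cos_ne hs ⟨hσ.1, by linarith [hσ.2, hσ.1]⟩ hne
    (fun h => by linarith [hσ.2, hs.2])
  rw [div_eq_div_iff (by simpa using h5) (by simpa using h4)]
  linarith

lemma slope_pos {α : ℝ} {w : ℝ → ℝ} (hw : IsSimpleLoop α w) {s σ : ℝ} (hs : s ∈ Ioo (0:ℝ) π)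
    (hσ : σ ∈ Icc (0:ℝ) (2*π)) (hne : σ ≠ s) (hne' : σ ≠ 2*π - s) :
    0 < (w σ - w s) / (2 * (Real.cos s - Real.cos σ)) := by
  have key : ∀ σ ∈ Icc (0:ℝ) π, σ ≠ s → 0 < (w σ - w s) / (2 * (Real.cos s - Real.cos σ)) := by
    intro σ hσ hne
    obtain ⟨ξ, -, h, e⟩ := slope_mvt hw hs hσ hne
    rw [e]
    have := hw.deriv_pos ξ h
    have := Real.sin_pos_of_mem_Ioo h
    positivity
  rcases le_total σ π with h | h
  · exact key σ ⟨hσ.1, h⟩ hne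
  · have := key (2*π - σ) ⟨by linarith [hσ.2], by linarith⟩ (fun h => hne' (by linarith))
    rwa [hw.symm, Real.cos_two_pi_sub] at this

lemma good_log {α : ℝ} {w : ℝ → ℝ} (hw : IsSimpleLoop α w) {s : ℝ} (hs : s ∈ Ioo (0:ℝ) π) :
    ∃ c, IntegrableOn (fun σ => (Real.log ((w σ - w s) / (2 * (Real.cos s - Real.cos σ))) - c)
      / (Real.cos s - Real.cos σ)) (Icc 0 (2*π)) := by
  obtain ⟨m, hm, hlow⟩ := sl_lower hw
  obtain ⟨B, hB, hup⟩ := sl_upper hw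
  obtain ⟨D, hD, hd2⟩ := sl_bound2 hw
  have hmeas : Measurable w := hw.smooth.continuous.measurable
  set M := |Real.log (m/2)| + |Real.log (B/2)| + (D/m + 1) with hM
  have hDm : 0 < D/m := by positivity
  refine ⟨_, (good_of_mvt (Φ := fun x => Real.log (deriv w x / (2 * sin x)))
    (Φ' := fun x => deriv (deriv w) x / deriv w x - Real.cos x / sin x) (M := M)
    (F := fun σ => Real.log ((w σ - w s) / (2 * (Real.cos s - Real.cos σ))))
    hs ?_ ?_ ?_ (by fun_prop) ?_ ?_).1⟩
  · intro x hx
    have h1 := Real.sin_pos_of_mem_Ioo hx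
    have h2 : m/2 ≤ deriv w x / (2 * sin x) := by
      rw [div_le_div_iff₀ (by norm_num) (by positivity)]; linarith [hlow x hx]
    have h3 : deriv w x / (2 * sin x) ≤ B/2 := by
      rw [div_le_div_iff₀ (by positivity) (by norm_num)]; linarith [hup x hx]
    have h4 := Real.log_le_log (by positivity) h2
    have h5 := Real.log_le_log (lt_of_lt_of_le (by positivity) h2) h3
    rw [abs_le]
    constructor
    · linarith [neg_abs_le (Real.log (m/2)), abs_nonneg (Real.log (B/2))]
    · linarith [le_abs_self (Real.log (B/2)), abs_nonneg (Real.log (m/2))]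
  · intro x hx
    have h1 := Real.sin_pos_of_mem_Ioo hx
    have h2 := hw.deriv_pos x hx
    have := ((sl_deriv2 hw x).div ((Real.hasDerivAt_sin x).const_mul 2) (by positivity)).log
      (by simp only [Pi.div_apply]; positivity)
    refine this.congr_deriv ?_
    simp only [Pi.div_apply]
    field_simp
  · intro x hx
    have h1 := Real.sin_pos_of_mem_Ioo hx
    have h2 := hw.deriv_pos x hx
    have h3 : |deriv (deriv w) x / deriv w x| ≤ (D/m) / sin x := by
      rw [abs_div, abs_of_pos h2, div_div]
      gcongr
      · exact hd2 x ⟨hx.1.le, hx.2.le⟩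
      · exact hlow x hx
    have h4 : |Real.cos x / sin x| ≤ 1 / sin x := by
      rw [abs_div, abs_of_pos h1]
      gcongr
      exact Real.abs_cos_le_one x
    calc _ ≤ |deriv (deriv w) x / deriv w x| + |Real.cos x / sin x| := abs_sub _ _
      _ ≤ (D/m) / sin x + 1 / sin x := by gcongr
      _ = (D/m+1) / sin x := by ring
      _ ≤ _ := by
        gcongr
        linarith [abs_nonneg (Real.log (B/2)), abs_nonneg (Real.log (m/2))]
  · intro x
    rw [hw.symm, Real.cos_two_pi_sub]
  · intro σ hσ hne
    obtain ⟨ξ, h1, -, e⟩ := slope_mvt hw hs ⟨hσ.1.le, hσ.2.le⟩ hne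
    exact ⟨ξ, h1, by rw [e]⟩

lemma H_bound {L r : ℝ} (hL : |L| ≤ 1) (hL0 : L ≤ 0) (hr : r ∈ Icc (0:ℝ) 1) :
    1/3 ≤ 1 + (Real.exp L - 1) * r ∧
    |(Real.exp L - 1) / (1 + (Real.exp L - 1) * r) - L| ≤ 9 * L^2 := by
  set u := Real.exp L - 1 with hu
  have h1 : |u| ≤ 2 * |L| := Real.abs_exp_sub_one_le hL
  have h2 : |u - L| ≤ L^2 := Real.abs_exp_sub_one_sub_id_le hL
  have h3 : u ≤ 0 := by have := Real.exp_le_one_iff.2 hL0; linarith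
  have h4 : 1/3 ≤ Real.exp L := by
    have h5 : Real.exp (-1) ≤ Real.exp L := Real.exp_le_exp.2 (abs_le.1 hL).1
    rw [Real.exp_neg] at h5
    have h6 : (1/3:ℝ) ≤ (Real.exp 1)⁻¹ := by
      rw [one_div]
      exact inv_anti₀ (Real.exp_pos 1) (by linarith [Real.exp_one_lt_d9])
    linarith
  have h5 : 1/3 ≤ 1 + u * r := by nlinarith [hr.1, hr.2]
  refine ⟨h5, ?_⟩
  have h6 : 0 < 1 + u * r := by linarith
  have e : u / (1 + u * r) - L = (u - L - L * u * r) / (1 + u * r) := by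
    field_simp
    ring
  rw [e, abs_div, abs_of_pos h6, div_le_iff₀ h6]
  have h7 : |L * u * r| ≤ 2 * L^2 := by
    rw [abs_mul, abs_mul, abs_of_nonneg hr.1, ← sq_abs L]
    calc |L| * |u| * r ≤ |L| * (2 * |L|) * 1 := by
          have := hr.1
          have := hr.2
          gcongr
      _ = _ := by ring
  have h8 := abs_sub (u - L) (L * u * r)
  nlinarith [sq_nonneg L]

lemma H_val {L r : ℝ} (hL : |L| ≤ 1) (hL0 : L ≤ 0) (hr : r ∈ Icc (0:ℝ) 1) :
    |Real.log (1 + (Real.exp L - 1) * r) - L * r| ≤ 9 * L^2 := by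
  have := (convex_Icc (0:ℝ) 1).norm_image_sub_le_of_norm_hasDerivWithin_le
    (f := fun r => Real.log (1 + (Real.exp L - 1) * r) - L * r)
    (f' := fun r => (Real.exp L - 1) / (1 + (Real.exp L - 1) * r) - L)
    (C := 9 * L^2) (x := 0) (y := r) (fun y hy => by
      have h := (H_bound hL hL0 hy).1
      have d : HasDerivAt (fun r : ℝ => 1 + (Real.exp L - 1) * r) (Real.exp L - 1) y := by
        simpa using ((hasDerivAt_id y).const_mul (Real.exp L - 1)).const_add 1
      have d2 : HasDerivAt (fun r : ℝ => L * r) L y := by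
        simpa using (hasDerivAt_id y).const_mul L
      exact ((d.log (by linarith)).sub d2).hasDerivWithinAt)
    (fun y hy => (H_bound hL hL0 hy).2) (by simp) hr
  simp at this
  refine this.trans ?_
  rw [abs_of_nonneg hr.1]
  nlinarith [hr.2, sq_nonneg L]

lemma ratio_mvt {α : ℝ} {w g : ℝ → ℝ} (hw : IsSimpleLoop α w) (hg : IsSimpleLoop α g) {s σ : ℝ}
    (hs : s ∈ Ioo (0:ℝ) π) (hσ : σ ∈ Ioo (0:ℝ) π) (hne : σ ≠ s) :
    ∃ ξ ∈ Set.uIcc s σ, (g σ - g s) / (w σ - w s) = deriv g ξ / deriv w ξ := by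
  obtain ⟨ξ, h1, -, e⟩ := cauchy_mvt (sl_deriv hg) (sl_deriv hw) hne
  have hsub : Set.uIcc s σ ⊆ Ioo 0 π := Set.OrdConnected.uIcc_subset Set.ordConnected_Ioo hs hσ
  refine ⟨ξ, h1, ?_⟩
  have h2 := (hw.deriv_pos ξ (hsub h1)).ne'
  have h3 := slope_pos hw hs ⟨hσ.1.le, by linarith [hσ.1, hσ.2]⟩ hne
    (fun h => by linarith [hσ.2, hs.2])
  have h4 : w σ - w s ≠ 0 := by
    intro h
    rw [h] at h3
    simp at h3
  rw [div_eq_div_iff h4 h2]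
  linarith

lemma ratio_deriv {α : ℝ} {w g : ℝ → ℝ} (hw : IsSimpleLoop α w) (hg : IsSimpleLoop α g)
    (hle : ∀ x ∈ Ioo (0:ℝ) π, deriv g x ≤ deriv w x) :
    ∃ M : ℝ, 1 ≤ M ∧ ∀ x ∈ Ioo (0:ℝ) π, deriv g x / deriv w x ∈ Icc (0:ℝ) 1 ∧
      ∃ d : ℝ, HasDerivAt (fun x => deriv g x / deriv w x) d x ∧ |d| ≤ M / sin x := by
  obtain ⟨m, hm, hlow⟩ := sl_lower hw
  obtain ⟨D, hD, hd⟩ := sl_bound2 hw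
  obtain ⟨E, hE, he⟩ := sl_bound2 hg
  have hp : 0 < (E + D)/m := by positivity
  refine ⟨1 + (E + D)/m, by linarith, fun x hx => ?_⟩
  have h1 := Real.sin_pos_of_mem_Ioo hx
  have h2 := hw.deriv_pos x hx
  have h3 := hg.deriv_pos x hx
  have h4 := hle x hx
  refine ⟨⟨by positivity, by rw [div_le_one h2]; exact h4⟩, _,
    (sl_deriv2 hg x).fun_div (sl_deriv2 hw x) h2.ne', ?_⟩
  have h5 := hd x ⟨hx.1.le, hx.2.le⟩
  have h6 := he x ⟨hx.1.le, hx.2.le⟩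
  rw [abs_div, abs_of_pos (by positivity : 0 < deriv w x ^ 2)]
  calc _ ≤ (|deriv (deriv g) x * deriv w x| + |deriv g x * deriv (deriv w) x|) / deriv w x ^ 2 := by
        gcongr; exact abs_sub _ _
    _ ≤ (E * deriv w x + deriv w x * D) / deriv w x ^ 2 := by
        rw [abs_mul, abs_mul, abs_of_pos h2, abs_of_pos h3]
        gcongr
    _ = (E + D) / deriv w x := by field_simp
    _ ≤ (E + D) / (m * sin x) := by
        gcongr
        exact hlow x hx
    _ = ((E + D)/m) / sin x := by rw [div_div]
    _ ≤ _ := by gcongr; linarith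

lemma bSymb_off {w : ℝ → ℝ} {s σ : ℝ} (h : Real.cos s - Real.cos σ ≠ 0) :
    bSymb w σ s = (w σ - w s) / (2 * (Real.cos s - Real.cos σ)) := by
  unfold bSymb
  rw [if_neg (fun e => h (by rw [e, sub_self]))]

lemma main_bound {α : ℝ} {f g : ℝ → ℝ} (hf : IsSimpleLoop α f) (hg : IsSimpleLoop α g)
    (hw : IsSimpleLoop α (fun θ => f θ + g θ)) :
    ∃ C > (0:ℝ), ∀ L : ℝ, |L| ≤ 1 → L ≤ 0 →
      IsSimpleLoop α (fun θ => f θ + Real.exp L * g θ) → ∀ s ∈ Ioo (0:ℝ) π,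
      |etaF (fun θ => f θ + Real.exp L * g θ) s - etaF (fun θ => f θ + g θ) s - phiF f g s * L|
        ≤ C * L^2 := by
  have hmw : Measurable (fun θ => f θ + g θ) := hw.smooth.continuous.measurable
  have hmg : Measurable g := hg.smooth.continuous.measurable
  obtain ⟨M, hM1, hM⟩ := ratio_deriv hw hg (fun x hx => by
    have e : deriv (fun θ => f θ + g θ) x = deriv f x + deriv g x :=
      ((sl_deriv hf x).fun_add (sl_deriv hg x)).deriv
    rw [e]
    linarith [hf.deriv_pos x hx])
  generalize hwdef : (fun θ => f θ + g θ) = w at *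
  have hwv : ∀ x, w x = f x + g x := fun x => by rw [← hwdef]
  choose! hρ ρ' hρd hρb using hM
  refine ⟨5 * π^2 * (9 * M), by positivity, fun L hL hL0 hwt s hs => ?_⟩
  set u := Real.exp L - 1 with hu
  have hsin := Real.sin_pos_of_mem_Ioo hs
  set r : ℝ → ℝ := fun σ => (g σ - g s) / (w σ - w s) with hr
  have hrm : Measurable r := by fun_prop
  have hrs : ∀ x, r (2*π - x) = r x := fun x => by simp only [hr]; rw [hw.symm, hg.symm]
  obtain ⟨c2, i2⟩ := good_log hw hs
  set F2 : ℝ → ℝ := fun σ => Real.log ((w σ - w s) / (2 * (Real.cos s - Real.cos σ))) with hF2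
  obtain ⟨i3, -⟩ := good_of_mvt (F := r) hs
    (fun x hx => (abs_le.2 ⟨by linarith [(hρ x hx).1], (hρ x hx).2⟩ : _ ≤ (1:ℝ)).trans hM1)
    hρd hρb hrm hrs (fun σ hσ hne => ratio_mvt hw hg hs hσ hne)
  obtain ⟨i4, b4⟩ := good_of_mvt (F := fun σ => Real.log (1 + u * r σ) - L * r σ)
    (Φ := fun x => Real.log (1 + u * (deriv g x / deriv w x)) - L * (deriv g x / deriv w x))
    (Φ' := fun x => (u / (1 + u * (deriv g x / deriv w x)) - L) * ρ' x)
    (M := 9 * M * L^2) hs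
    (fun x hx => (H_val hL hL0 (hρ x hx)).trans (by nlinarith [sq_nonneg L]))
    (fun x hx => by
      have h := (H_bound hL hL0 (hρ x hx)).1
      have d1 := ((hρd x hx).const_mul u).const_add 1
      have d2 := (hρd x hx).const_mul L
      refine ((d1.log (by linarith)).fun_sub d2).congr_deriv ?_
      ring)
    (fun x hx => by
      have h := (H_bound hL hL0 (hρ x hx)).2
      have h1 := Real.sin_pos_of_mem_Ioo hx
      rw [abs_mul]
      calc _ ≤ 9 * L^2 * (M / sin x) := by
            gcongr
            exact hρb x hx
        _ = _ := by ring)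
    (by fun_prop) (fun x => by simp only [hrs])
    (fun σ hσ hne => by
      obtain ⟨ξ, h1, h2⟩ := ratio_mvt hw hg hs hσ hne
      exact ⟨ξ, h1, by simp only [hr, h2]⟩)
  set c3 := deriv g s / deriv w s
  set c4 := Real.log (1 + u * c3) - L * c3
  set H : ℝ → ℝ := fun σ => Real.log (1 + u * r σ) - L * r σ with hH
  set F1 : ℝ → ℝ := fun σ => F2 σ + L * r σ + H σ with hF1
  have ev : ∀ σ, (F1 σ - (c2 + L * c3 + c4)) / (Real.cos s - Real.cos σ)
      = (F2 σ - c2) / (Real.cos s - Real.cos σ) + L * ((r σ - c3) / (Real.cos s - Real.cos σ))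
        + (H σ - c4) / (Real.cos s - Real.cos σ) := by
    intro σ
    simp only [hF1]
    ring
  have i1 : IntegrableOn (fun σ => (F1 σ - (c2 + L * c3 + c4)) / (Real.cos s - Real.cos σ))
      (Icc 0 (2*π)) := by
    simp_rw [ev]
    exact (i2.add (i3.const_mul L)).add i4
  have e1 : ∫ σ in Icc 0 (2*π), (F1 σ - (c2 + L * c3 + c4)) / (Real.cos s - Real.cos σ)
      = (∫ σ in Icc 0 (2*π), (F2 σ - c2) / (Real.cos s - Real.cos σ))
      + L * (∫ σ in Icc 0 (2*π), (r σ - c3) / (Real.cos s - Real.cos σ))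
      + ∫ σ in Icc 0 (2*π), (H σ - c4) / (Real.cos s - Real.cos σ) := by
    simp_rw [ev]
    have i5 : IntegrableOn (fun σ => (F2 σ - c2) / (Real.cos s - Real.cos σ)
        + L * ((r σ - c3) / (Real.cos s - Real.cos σ))) (Icc 0 (2*π)) :=
      i2.add (i3.const_mul L)
    have i6 : IntegrableOn (fun σ => (H σ - c4) / (Real.cos s - Real.cos σ)) (Icc 0 (2*π)) := i4
    have i7 : IntegrableOn (fun σ => (F2 σ - c2) / (Real.cos s - Real.cos σ)) (Icc 0 (2*π)) := i2
    rw [integral_add i5 i6, integral_add i7 (i3.const_mul L), integral_const_mul]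
  have p1 := pv_eq (F := F1) (u := fun σ => Real.log (bSymb (fun θ => f θ + Real.exp L * g θ) σ s)
      / (Real.cos s - Real.cos σ)) hs (fun σ hσ n1 n2 => by
    have hc := cos_ne hs hσ n1 n2
    have hb := slope_pos hw hs hσ n1 n2
    have hbt := slope_pos hwt hs hσ n1 n2
    have hww : w σ - w s ≠ 0 := by
      intro h
      rw [h] at hb
      simp at hb
    have e : (f σ + Real.exp L * g σ - (f s + Real.exp L * g s)) / (2 * (Real.cos s - Real.cos σ))
      = (w σ - w s) / (2 * (Real.cos s - Real.cos σ)) * (1 + u * r σ) := by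
      have e5 : (w σ - w s) * (1 + u * r σ) = w σ - w s + u * (g σ - g s) := by
        simp only [hr]; field_simp
      rw [div_mul_eq_mul_div, e5, hwv, hwv, hu]
      congr 1
      ring
    simp only [bSymb_off hc]
    rw [e] at hbt ⊢
    rw [Real.log_mul hb.ne' (fun h => by rw [h] at hbt; simp at hbt)]
    simp only [hF1, hF2, hH]
    ring) i1
  have p2 := pv_eq (F := F2) (u := fun σ => Real.log (bSymb w σ s)
      / (Real.cos s - Real.cos σ)) hs (fun σ hσ n1 n2 => by
    have hc := cos_ne hs hσ n1 n2
    simp only [bSymb_off hc, hF2]) i2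
  have p3 := pv_eq (F := r) (u := fun σ => bSymb g σ s /
      ((bSymb f σ s + bSymb g σ s) * (Real.cos s - Real.cos σ))) hs (fun σ hσ n1 n2 => by
    have hc := cos_ne hs hσ n1 n2
    have hb := slope_pos hw hs hσ n1 n2
    have e : bSymb f σ s + bSymb g σ s = (w σ - w s) / (2 * (Real.cos s - Real.cos σ)) := by
      rw [bSymb_off hc, bSymb_off hc, hwv, hwv]; ring
    have hww : w σ - w s ≠ 0 := by
      intro h
      rw [h] at hb
      simp at hb
    simp only [e]
    rw [bSymb_off hc]
    simp only [hr]
    field_simp) i3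
  unfold etaF phiF
  rw [p1, p2, p3, e1]
  set I4 := ∫ σ in Icc 0 (2*π), (H σ - c4) / (Real.cos s - Real.cos σ)
  calc _ = |(sin s * I4) / (2*π)| := by congr 1; ring
    _ = |sin s * I4| / (2*π) := by rw [abs_div, abs_of_pos (by positivity : 0 < 2*π)]
    _ ≤ (10 * π^3 * (9 * M * L^2)) / (2*π) := by gcongr
    _ = _ := by field_simp; ring

end EtaProof

open Real in
/-- Lemma 3.1(ii) (Lemma `lm:eta`(ii)):
`η_{f+gh^h}(s) = η_{f+g}(s) + φ(s)·h·log h + O(h² log² h)`. -/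
theorem eta_expansion_h_pow_h (α : ℝ) (hα : 2 ≤ α) (f g : ℝ → ℝ)
    (hf : IsSimpleLoop α f) (hg : IsSimpleLoop α g)
    (hSL : ∀ n : ℕ, IsSimpleLoop α
      (fun θ => f θ + ((1/(n+1:ℝ)) ^ (1/(n+1:ℝ))) * g θ))
    (hSL' : IsSimpleLoop α (fun θ => f θ + g θ)) :
    ∃ C > (0:ℝ), ∃ N : ℕ, ∀ n ≥ N, ∀ s ∈ Set.Ioo (0:ℝ) π,
      |etaF (fun θ => f θ + ((1/(n+1:ℝ)) ^ (1/(n+1:ℝ))) * g θ) s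
          - etaF (fun θ => f θ + g θ) s
          - phiF f g s * (1/(n+1:ℝ)) * Real.log (1/(n+1:ℝ))|
        ≤ C * (1/(n+1:ℝ))^2 * (Real.log (1/(n+1:ℝ)))^2 := by
  obtain ⟨C, hC, h⟩ := main_bound hf hg hSL'
  refine ⟨C, hC, 0, fun n _ s hs => ?_⟩
  have hn : (0:ℝ) < n + 1 := by positivity
  set x : ℝ := 1/(n+1:ℝ) with hx
  have hx0 : 0 < x := by positivity
  have hx1 : x ≤ 1 := by
    rw [hx, div_le_one hn]
    have : (0:ℝ) ≤ n := Nat.cast_nonneg n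
    linarith
  have e : x ^ x = Real.exp (Real.log x * x) := Real.rpow_def_of_pos hx0 x
  have hsl := hSL n
  rw [← hx, e] at hsl
  have := h (Real.log x * x) (Real.abs_log_mul_self_lt x hx0 hx1).le
    (mul_nonpos_of_nonpos_of_nonneg (Real.log_nonpos hx0.le hx1) hx0.le) hsl s hs
  rw [e]
  convert this using 1
  · congr 1; ring
  · ring
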